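/- Let G be any graph with labeled vertices and edges. Two spatial embeddings f₁, f₂ of G into S³ are C_k-equivalent if and only if v_{(k)}(f₁) = v_{(k)}(f₂), i.e. if and only if f₁ − f₂ ∈ V(k). -/

import Mathlib

/-!
Write `~` for the equivalence relation on embeddings generated by `C_k`-moves and ambient isotopies.
For a singular spatial graph `F` of type `(k)` the alternating sum `κ(F)` has just the two terms
`F ∅ - F univ` (`SpatialGraphTheory.kappa_one`), and `F ∅`, `F univ` differ by one `C_k`-move.

* If `f₁ ~ f₂`, then `f₁ - f₂ ∈ V(k)`: a `C_k`-move contributes a generator of `V(k)`, an isotopy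
  contributes `0`, and `f - g ∈ V(k)` is an equivalence relation in `f`, `g`
  (`SpatialGraphTheory.sub_mem_V_of_ckEquiv`).
* Conversely, sending an embedding to its `~`-class induces a homomorphism from `ZΓ(G)` to the free
  abelian group on the `~`-classes (`SpatialGraphTheory.toClasses`). It kills every generator of
  `V(k)`, so `f₁ - f₂ ∈ V(k)` forces the basis elements of the classes of `f₁` and `f₂` to
  coincide, hence also the classes (`SpatialGraphTheory.ckEquiv_of_sub_mem_V`).
-/

/-- An abstract axiomatization of the theory of spatial embeddings of a fixed
graph `G` (with labeled vertices and edges) into `S³`, together with ambient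
isotopy, Habiro's `C_k`-moves, and singular spatial graphs. -/
structure SpatialGraphTheory where
  /-- spatial graphs, i.e. embeddings of the fixed graph `G` into `S³` -/
  Emb : Type
  /-- ambient isotopy of spatial graphs (respecting labels) -/
  isotopic : Emb → Emb → Prop
  isotopic_equiv : Equivalence isotopic
  /-- `move k f g` : `g` is obtained from `f` by a single `C_k`-move performed in a ball -/
  move : ℕ+ → Emb → Emb → Prop
  /-- `Sing ks F` : the family `F` over subsets `P ⊆ {1,...,l}` is a singular
  spatial graph of type `(k_1,...,k_l)`: the `F P` agree outside `l` mutually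
  disjoint balls `h_i(B³)`, the pair `(h_i⁻¹(F ∅), h_i⁻¹(F univ))` is a
  `C_{k_i}`-move, and `F P` agrees with `F univ` inside `h_i(B³)` exactly when
  `i ∈ P`, and with `F ∅` otherwise. -/
  Sing : ∀ {l : ℕ}, (Fin l → ℕ+) → (Finset (Fin l) → Emb) → Prop
  /-- a singular spatial graph of type `(k)` is exactly a single `C_k`-move -/
  sing_single : ∀ (k : ℕ+) (F : Finset (Fin 1) → Emb),
      Sing (fun _ => k) F ↔ move k (F ∅) (F Finset.univ)

namespace SpatialGraphTheory

variable (T : SpatialGraphTheory)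

/-- the setoid of ambient isotopy -/
def isoSetoid : Setoid T.Emb := ⟨T.isotopic, T.isotopic_equiv⟩

/-- `Γ(G)`: the set of ambient isotopy classes of spatial graphs -/
def Gamma : Type := Quotient T.isoSetoid

/-- the ambient isotopy class of a spatial graph -/
def cls (f : T.Emb) : T.Gamma := Quotient.mk T.isoSetoid f

/-- one step: a single `C_k`-move or an ambient isotopy -/
def step (k : ℕ+) (f g : T.Emb) : Prop := T.move k f g ∨ T.isotopic f g

/-- `C_k`-equivalence: the equivalence relation generated by `C_k`-moves
and ambient isotopies -/
def CkEquiv (k : ℕ+) : T.Emb → T.Emb → Prop := Relation.EqvGen (T.step k)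

/-- `ZΓ(G)`: the free abelian group generated by `Γ(G)` -/
abbrev ZG : Type := FreeAbelianGroup T.Gamma

/-- `κ(f) = Σ_{P ⊆ {1,...,l}} (-1)^{|P|} f_P ∈ ZΓ(G)` for a singular spatial
graph `F` -/
def kappa {l : ℕ} (F : Finset (Fin l) → T.Emb) : T.ZG :=
  ∑ P : Finset (Fin l), ((-1 : ℤ) ^ P.card) • FreeAbelianGroup.of (T.cls (F P))

/-- `V(k_1,...,k_l)`: the subgroup of `ZΓ(G)` generated by all `κ(f)` where `f`
varies over all singular spatial graphs of type `(k_1,...,k_l)` -/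
def V {l : ℕ} (ks : Fin l → ℕ+) : AddSubgroup T.ZG :=
  AddSubgroup.closure
    {x | ∃ F : Finset (Fin l) → T.Emb, T.Sing ks F ∧ x = T.kappa F}

/-- the universal Vassiliev invariant `v_{(k_1,...,k_l)} : Γ(G) → ZΓ(G)/V(k_1,...,k_l)` -/
def v {l : ℕ} (ks : Fin l → ℕ+) : T.Gamma → T.ZG ⧸ T.V ks :=
  fun a => QuotientAddGroup.mk (FreeAbelianGroup.of a)

end SpatialGraphTheory

namespace SpatialGraphTheory

theorem kappa_one (T : SpatialGraphTheory) (F : Finset (Fin 1) → T.Emb) :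
    T.kappa F = FreeAbelianGroup.of (T.cls (F ∅)) -
      FreeAbelianGroup.of (T.cls (F Finset.univ)) := by
  have h : (Finset.univ : Finset (Finset (Fin 1))) = {∅, Finset.univ} := by decide
  have hne : (∅ : Finset (Fin 1)) ≠ Finset.univ := by decide
  rw [kappa, h, Finset.sum_pair hne]
  simp [sub_eq_add_neg]

/-- A single `C_k`-move gives a generator of `V(k)`. -/
theorem sub_mem_V_of_move (T : SpatialGraphTheory) (k : ℕ+) {f g : T.Emb} (h : T.move k f g) :
    FreeAbelianGroup.of (T.cls f) - FreeAbelianGroup.of (T.cls g) ∈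
      T.V (fun _ : Fin 1 => k) := by
  classical
  let F : Finset (Fin 1) → T.Emb := fun P => if P = ∅ then f else g
  have h0 : F ∅ = f := rfl
  have h1 : F Finset.univ = g := if_neg (by decide)
  refine AddSubgroup.subset_closure ⟨F, (T.sing_single k F).2 ?_, ?_⟩
  · rwa [h0, h1]
  · rw [kappa_one, h0, h1]

theorem sub_mem_V_of_ckEquiv (T : SpatialGraphTheory) (k : ℕ+) {f g : T.Emb}
    (h : T.CkEquiv k f g) :
    FreeAbelianGroup.of (T.cls f) - FreeAbelianGroup.of (T.cls g) ∈
      T.V (fun _ : Fin 1 => k) := by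
  induction h with
  | rel f g h =>
    rcases h with h | h
    · exact T.sub_mem_V_of_move k h
    · have : T.cls f = T.cls g := Quotient.sound h
      rw [this, sub_self]
      exact zero_mem _
  | refl f => rw [sub_self]; exact zero_mem _
  | symm f g _ ih => rw [← neg_sub]; exact neg_mem ih
  | trans f g e _ _ ih₁ ih₂ => rw [← sub_add_sub_cancel]; exact add_mem ih₁ ih₂

/-- The setoid of `C_k`-equivalence on embeddings. -/
def ckSetoid (T : SpatialGraphTheory) (k : ℕ+) : Setoid T.Emb := Relation.EqvGen.setoid (T.step k)

/-- The homomorphism from `ZΓ(G)` to the free abelian group on the `C_k`-equivalence classes that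
sends the isotopy class of an embedding to its `C_k`-equivalence class. -/
def toClasses (T : SpatialGraphTheory) (k : ℕ+) :
    T.ZG →+ FreeAbelianGroup (Quotient (T.ckSetoid k)) :=
  FreeAbelianGroup.map (Quotient.lift (s := T.isoSetoid) (Quotient.mk (T.ckSetoid k))
    fun f g h => Quotient.sound (Relation.EqvGen.rel f g (Or.inr h)))

theorem toClasses_of_cls (T : SpatialGraphTheory) (k : ℕ+) (f : T.Emb) :
    T.toClasses k (FreeAbelianGroup.of (T.cls f)) =
      FreeAbelianGroup.of (Quotient.mk (T.ckSetoid k) f) :=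
  FreeAbelianGroup.map_of_apply _

theorem V_le_ker_toClasses (T : SpatialGraphTheory) (k : ℕ+) :
    T.V (fun _ : Fin 1 => k) ≤ (T.toClasses k).ker := by
  refine (AddSubgroup.closure_le _).2 ?_
  rintro _ ⟨F, hF, rfl⟩
  have hF' : Quotient.mk (T.ckSetoid k) (F ∅) = Quotient.mk (T.ckSetoid k) (F Finset.univ) :=
    Quotient.sound (Relation.EqvGen.rel _ _ (Or.inl ((T.sing_single k F).1 hF)))
  rw [SetLike.mem_coe, AddMonoidHom.mem_ker, kappa_one, map_sub, toClasses_of_cls,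
    toClasses_of_cls, hF', sub_self]

theorem ckEquiv_of_sub_mem_V (T : SpatialGraphTheory) (k : ℕ+) {f g : T.Emb}
    (h : FreeAbelianGroup.of (T.cls f) - FreeAbelianGroup.of (T.cls g) ∈
      T.V (fun _ : Fin 1 => k)) : T.CkEquiv k f g := by
  have h' := T.V_le_ker_toClasses k h
  rw [AddMonoidHom.mem_ker, map_sub, toClasses_of_cls, toClasses_of_cls, sub_eq_zero] at h'
  exact Quotient.exact (FreeAbelianGroup.of_injective h')

end SpatialGraphTheory

/-- Let `G` be any graph with labeled vertices and edges. Two spatial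
embeddings `f₁, f₂` of `G` into `S³` are `C_k`-equivalent if and only if
`v_{(k)}(f₁) = v_{(k)}(f₂)`, i.e. if and only if `f₁ - f₂ ∈ V(k)`. -/
theorem ckEquiv_iff_vk (T : SpatialGraphTheory) (k : ℕ+) (f₁ f₂ : T.Emb) :
    (T.CkEquiv k f₁ f₂ ↔
      T.v (fun _ : Fin 1 => k) (T.cls f₁) = T.v (fun _ : Fin 1 => k) (T.cls f₂)) ∧
    (T.CkEquiv k f₁ f₂ ↔
      FreeAbelianGroup.of (T.cls f₁) - FreeAbelianGroup.of (T.cls f₂) ∈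
        T.V (fun _ : Fin 1 => k)) := by
  have key : T.CkEquiv k f₁ f₂ ↔
      FreeAbelianGroup.of (T.cls f₁) - FreeAbelianGroup.of (T.cls f₂) ∈
        T.V (fun _ : Fin 1 => k) :=
    ⟨T.sub_mem_V_of_ckEquiv k, T.ckEquiv_of_sub_mem_V k⟩
  refine ⟨key.trans ?_, key⟩
  exact (QuotientAddGroup.eq_iff_sub_mem).symm
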